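/- arXiv:2602.19210 — 2 statements merged into one kernel-verified Lean document; each statement's English description precedes it below -/
import Mathlib

section
/- Let Â : [0,T] → ℝ^{d×d}, B̂ : [0,T] → ℝ^{d×κ}, R̂ : [0,T] → ℝ^{κ×κ} and Q̂ : [0,T] → ℝ^{d×d} be continuous, suppose R̂_t − c·Id ⪰ 0 for every t for some c > 0, Q̂_t ⪰ 0 for every t, and let G ∈ ℝ^{d×d} with G ⪰ 0. Then the terminal-value matrix Riccati equation dP_t/dt = −(P_t Â_t + Â_tᵀ P_t − P_t B̂_t R̂_t⁻¹ B̂_tᵀ P_t + Q̂_t), P_T = G, has exactly one continuously differentiable solution P : [0,T] → ℝ^{d×d} on all of [0,T], and moreover P_t ⪰ 0 for every t ∈ [0,T]. -/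
open MeasureTheory Matrix Set

noncomputable section

abbrev Mat (d : ℕ) := Matrix (Fin d) (Fin d) ℝ

attribute [local instance] Matrix.normedAddCommGroup Matrix.normedSpace

/-!
Write `S = B̂ R̂⁻¹ B̂ᵀ ⪰ 0`. If `(X, Y)` solves the linear Hamiltonian system
`X' = Â X - S Y`, `Y' = -Q̂ X - Âᵀ Y` with `X_T = 1`, `Y_T = G`, then `P = Y X⁻¹` solves the Riccati
equation wherever `X` is invertible. Since `(Xᵀ Y)' = -(Yᵀ S Y + Xᵀ Q̂ X) ⪯ 0`, the matrix `Xᵀ Y`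
stays above its terminal value `G ⪰ 0`, and `P` is congruent to it. If `X_{t₀} v = 0`, then
`Xᵀ Y v` vanishes on `[t₀, T]`, so `S Y v = 0` there; hence `X v` solves the linear equation
`x' = Â x` with `x_{t₀} = 0`, so that `v = X_T v = 0`. Uniqueness holds because the difference of
two solutions of the Riccati equation solves a homogeneous linear equation.
-/

open scoped NNReal

section LipschitzODE

variable {E : Type*} [NormedAddCommGroup E] [NormedSpace ℝ E] {a b : ℝ} {K : ℝ≥0}
  {v : ℝ → E → E}

/-- The radial retraction of a normed space onto the closed ball of radius `R`, used to make a
vector field bounded without changing it on that ball. Only meaningful for `0 < R`. -/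
def radialRetraction (R : ℝ) (x : E) : E := (R / max R ‖x‖) • x

lemma radialRetraction_of_norm_le {R : ℝ} (hR : 0 < R) {x : E} (hx : ‖x‖ ≤ R) :
    radialRetraction R x = x := by
  rw [radialRetraction, max_eq_left hx, div_self hR.ne', one_smul]

lemma norm_radialRetraction {R : ℝ} (hR : 0 < R) (x : E) :
    ‖radialRetraction R x‖ = R / max R ‖x‖ * ‖x‖ := by
  rw [radialRetraction, norm_smul, Real.norm_of_nonneg (by positivity)]

lemma norm_radialRetraction_le_norm {R : ℝ} (hR : 0 < R) (x : E) :
    ‖radialRetraction R x‖ ≤ ‖x‖ := by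
  rw [norm_radialRetraction hR]
  exact mul_le_of_le_one_left (norm_nonneg x)
    (div_le_one_of_le₀ (le_max_left _ _) (by positivity))

lemma norm_radialRetraction_le {R : ℝ} (hR : 0 < R) (x : E) : ‖radialRetraction R x‖ ≤ R := by
  rw [norm_radialRetraction hR, div_mul_eq_mul_div, div_le_iff₀ (by positivity)]
  gcongr
  exact le_max_right _ _

lemma lipschitzWith_radialRetraction {R : ℝ} (hR : 0 < R) :
    LipschitzWith 2 (radialRetraction R : E → E) := by
  refine LipschitzWith.of_dist_le_mul fun x y => ?_
  rw [dist_eq_norm, dist_eq_norm]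
  set p := max R ‖x‖ with hp
  set q := max R ‖y‖ with hq
  have hp_pos : 0 < p := lt_max_of_lt_left hR
  have hq_pos : 0 < q := lt_max_of_lt_left hR
  have hqp : |q - p| ≤ ‖x - y‖ := by
    rw [abs_sub_comm]
    refine (abs_max_sub_max_le_max R ‖x‖ R ‖y‖).trans ?_
    simpa using abs_norm_sub_norm_le x y
  have hRp : R / p ≤ 1 := div_le_one_of_le₀ (le_max_left _ _) hp_pos.le
  have hyq : ‖y‖ / q ≤ 1 := div_le_one_of_le₀ (le_max_right _ _) hq_pos.le
  have hsplit : radialRetraction R x - radialRetraction R y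
      = (R / p) • ((x - y) + ((q - p) / q) • y) := by
    have hcoeff : R / q = R / p - R / p * ((q - p) / q) := by field_simp; ring
    rw [radialRetraction, radialRetraction, ← hp, ← hq, hcoeff]
    module
  calc ‖radialRetraction R x - radialRetraction R y‖
      ≤ R / p * (‖x - y‖ + |q - p| * (‖y‖ / q)) := by
        rw [hsplit, norm_smul, Real.norm_of_nonneg (by positivity)]
        gcongr
        refine (norm_add_le _ _).trans_eq ?_
        rw [norm_smul, norm_div, Real.norm_of_nonneg hq_pos.le, Real.norm_eq_abs, div_mul_comm,
          mul_comm (‖y‖ / q)]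
    _ ≤ 1 * (‖x - y‖ + ‖x - y‖ * 1) := by gcongr
    _ = (2 : ℝ≥0) * ‖x - y‖ := by push_cast; ring

lemma exists_isIntegralCurveOn_Icc_of_norm_le [CompleteSpace E] (t₀ : Icc a b)
    (hlip : ∀ t ∈ Icc a b, LipschitzWith K (v t))
    (hcont : ∀ x, ContinuousOn (v · x) (Icc a b)) {L : ℝ≥0}
    (hL : ∀ t ∈ Icc a b, ∀ x, ‖v t x‖ ≤ L) (x₀ : E) :
    ∃ f : ℝ → E, f t₀ = x₀ ∧ IsIntegralCurveOn f v (Icc a b) := by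
  have hτ : 0 ≤ max (b - t₀) (t₀ - a) := le_max_of_le_left (sub_nonneg.2 t₀.2.2)
  have hv : IsPicardLindelof v t₀ x₀ (L * ⟨max (b - t₀) (t₀ - a), hτ⟩) 0 L K :=
    { lipschitzOnWith := fun t ht => (hlip t ht).lipschitzOnWith
      continuousOn := fun x _ => hcont x
      norm_le := fun t ht x _ => hL t ht x
      mul_max_le := (sub_zero _).ge }
  exact hv.exists_eq_forall_mem_Icc_hasDerivWithinAt₀

lemma norm_le_gronwallBound_of_isIntegralCurveOn {f : ℝ → E} {C : ℝ}
    (hf : IsIntegralCurveOn f v (Icc a b))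
    (hv : ∀ t ∈ Icc a b, ‖v t (f t)‖ ≤ K * ‖f t‖ + C) (hC : 0 ≤ C) :
    ∀ t ∈ Icc a b, ‖f t‖ ≤ gronwallBound ‖f a‖ K C (b - a) := by
  intro t ht
  have hder : ∀ s ∈ Ico a b, HasDerivWithinAt f (v s (f s)) (Ici s) s := fun s hs =>
    (hf s (Ico_subset_Icc_self hs)).mono_of_mem_nhdsWithin (Icc_mem_nhdsGE_of_mem hs)
  calc ‖f t‖ ≤ gronwallBound ‖f a‖ K C (t - a) :=
        norm_le_gronwallBound_of_norm_deriv_right_le hf.continuousOn hder le_rfl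
          (fun s hs => hv s (Ico_subset_Icc_self hs)) t ht
    _ ≤ gronwallBound ‖f a‖ K C (b - a) :=
        gronwallBound_mono (norm_nonneg _) hC K.2 (sub_le_sub_right ht.2 a)

/- Picard–Lindelöf on the whole interval applies to the truncated field `v t ∘ radialRetraction R`.
Its linear growth bound does not depend on `R`, so for `R` the resulting Grönwall bound the solution
never leaves the ball where the truncation is invisible. -/
theorem exists_isIntegralCurveOn_Icc_left [CompleteSpace E] (hab : a ≤ b)
    (hlip : ∀ t ∈ Icc a b, LipschitzWith K (v t))
    (hcont : ∀ x, ContinuousOn (v · x) (Icc a b)) (x₀ : E) :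
    ∃ f : ℝ → E, f a = x₀ ∧ IsIntegralCurveOn f v (Icc a b) := by
  obtain ⟨C, hC⟩ := isCompact_Icc.exists_bound_of_continuousOn (hcont 0)
  have hC_nonneg : 0 ≤ C := (norm_nonneg _).trans (hC a (left_mem_Icc.2 hab))
  have hgrowth : ∀ t ∈ Icc a b, ∀ x, ‖v t x‖ ≤ K * ‖x‖ + C := fun t ht x =>
    calc ‖v t x‖ ≤ ‖v t x - v t 0‖ + ‖v t 0‖ := norm_le_norm_sub_add _ _
      _ ≤ K * ‖x‖ + C := by
        gcongr
        · simpa only [sub_zero] using (hlip t ht).norm_sub_le x 0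
        · exact hC t ht
  obtain ⟨R, hR, hgronwall⟩ : ∃ R : ℝ, 0 < R ∧ gronwallBound ‖x₀‖ K C (b - a) ≤ R :=
    ⟨max 1 (gronwallBound ‖x₀‖ K C (b - a)), by positivity, le_max_right _ _⟩
  have hbound : ∀ t ∈ Icc a b, ∀ x, ‖v t (radialRetraction R x)‖ ≤ K * R + C := fun t ht x => by
    refine (hgrowth t ht _).trans ?_
    gcongr
    exact norm_radialRetraction_le hR x
  obtain ⟨f, hfa, hf⟩ := exists_isIntegralCurveOn_Icc_of_norm_le
    (v := fun t x => v t (radialRetraction R x)) ⟨a, left_mem_Icc.2 hab⟩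
    (fun t ht => (hlip t ht).comp (lipschitzWith_radialRetraction hR)) (fun x => hcont _)
    (L := ⟨K * R + C, by positivity⟩) hbound x₀
  have hfR : ∀ t ∈ Icc a b, ‖f t‖ ≤ R := fun t ht => by
    refine (norm_le_gronwallBound_of_isIntegralCurveOn hf (fun s hs => ?_) hC_nonneg t ht).trans
      (hfa ▸ hgronwall)
    refine (hgrowth s hs _).trans ?_
    gcongr
    exact norm_radialRetraction_le_norm hR _
  refine ⟨f, hfa, fun t ht => ?_⟩
  simpa only [radialRetraction_of_norm_le hR (hfR t ht)] using hf t ht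

theorem exists_isIntegralCurveOn_Icc_right [CompleteSpace E] (hab : a ≤ b)
    (hlip : ∀ t ∈ Icc a b, LipschitzWith K (v t))
    (hcont : ∀ x, ContinuousOn (v · x) (Icc a b)) (x₀ : E) :
    ∃ f : ℝ → E, f b = x₀ ∧ IsIntegralCurveOn f v (Icc a b) := by
  have hneg : ∀ t ∈ Icc (-b) (-a), -t ∈ Icc a b := fun t ht => ⟨le_neg.1 ht.2, neg_le.1 ht.1⟩
  obtain ⟨f, hfb, hf⟩ := exists_isIntegralCurveOn_Icc_left (v := fun t x => -v (-t) x)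
    (neg_le_neg hab) (fun t ht => (hlip _ (hneg t ht)).neg)
    (fun x => ((hcont x).comp continuousOn_neg hneg).neg) x₀
  refine ⟨fun t => f (-t), hfb, ?_⟩
  convert hf.comp_mul (-1) using 1
  · ext t; simp
  · ext t x; simp
  · ext t; simp [and_comm]

theorem eqOn_Icc_of_isIntegralCurveOn {t₀ : ℝ} {f g : ℝ → E}
    (hlip : ∀ t ∈ Icc a b, LipschitzWith K (v t)) (hf : IsIntegralCurveOn f v (Icc a b))
    (hg : IsIntegralCurveOn g v (Icc a b)) (ht₀ : t₀ ∈ Icc a b) (heq : f t₀ = g t₀) :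
    EqOn f g (Icc a b) := by
  have hleft : Icc a t₀ ⊆ Icc a b := Icc_subset_Icc_right ht₀.2
  have hright : Icc t₀ b ⊆ Icc a b := Icc_subset_Icc_left ht₀.1
  have hderiv_left : ∀ {h : ℝ → E}, IsIntegralCurveOn h v (Icc a b) →
      ∀ t ∈ Ioc a t₀, HasDerivWithinAt h (v t (h t)) (Iic t) t := fun hh t ht =>
    (hh.mono hleft t (Ioc_subset_Icc_self ht)).mono_of_mem_nhdsWithin (Icc_mem_nhdsLE_of_mem ht)
  have hderiv_right : ∀ {h : ℝ → E}, IsIntegralCurveOn h v (Icc a b) →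
      ∀ t ∈ Ico t₀ b, HasDerivWithinAt h (v t (h t)) (Ici t) t := fun hh t ht =>
    (hh.mono hright t (Ico_subset_Icc_self ht)).mono_of_mem_nhdsWithin (Icc_mem_nhdsGE_of_mem ht)
  rw [← Icc_union_Icc_eq_Icc ht₀.1 ht₀.2]
  refine EqOn.union ?_ ?_
  · exact ODE_solution_unique_of_mem_Icc_left (s := fun _ => univ)
      (fun t ht => (hlip t (hleft (Ioc_subset_Icc_self ht))).lipschitzOnWith)
      (hf.mono hleft).continuousOn (hderiv_left hf) (fun _ _ => mem_univ _)
      (hg.mono hleft).continuousOn (hderiv_left hg) (fun _ _ => mem_univ _) heq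
  · exact ODE_solution_unique_of_mem_Icc_right (s := fun _ => univ)
      (fun t ht => (hlip t (hright (Ico_subset_Icc_self ht))).lipschitzOnWith)
      (hf.mono hright).continuousOn (hderiv_right hf) (fun _ _ => mem_univ _)
      (hg.mono hright).continuousOn (hderiv_right hg) (fun _ _ => mem_univ _) heq

end LipschitzODE

section LinearODE

variable {E : Type*} [NormedAddCommGroup E] [NormedSpace ℝ E] {a b : ℝ} {L : ℝ → E →L[ℝ] E}

lemma exists_forall_lipschitzWith_of_continuousOn (hL : ContinuousOn L (Icc a b)) :
    ∃ K : ℝ≥0, ∀ t ∈ Icc a b, LipschitzWith K (L t) := by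
  obtain ⟨C, hC⟩ := isCompact_Icc.exists_bound_of_continuousOn hL
  exact ⟨C.toNNReal, fun t ht => (L t).lipschitz.weaken (NNReal.le_toNNReal_of_coe_le (hC t ht))⟩

theorem exists_isIntegralCurveOn_linear_right [CompleteSpace E] (hab : a ≤ b)
    (hL : ContinuousOn L (Icc a b)) (x₀ : E) :
    ∃ f : ℝ → E, f b = x₀ ∧ IsIntegralCurveOn f (fun t => L t) (Icc a b) := by
  obtain ⟨K, hK⟩ := exists_forall_lipschitzWith_of_continuousOn hL
  exact exists_isIntegralCurveOn_Icc_right hab hK (fun x => hL.clm_apply continuousOn_const) x₀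

theorem eqOn_zero_of_isIntegralCurveOn_linear {t₀ : ℝ} {f : ℝ → E}
    (hL : ContinuousOn L (Icc a b)) (hf : IsIntegralCurveOn f (fun t => L t) (Icc a b))
    (ht₀ : t₀ ∈ Icc a b) (hft₀ : f t₀ = 0) : EqOn f 0 (Icc a b) := by
  obtain ⟨K, hK⟩ := exists_forall_lipschitzWith_of_continuousOn hL
  have hzero : IsIntegralCurveOn (0 : ℝ → E) (fun t => L t) (Icc a b) := fun t _ => by
    simp only [Pi.zero_apply, map_zero]
    exact hasDerivWithinAt_const t _ 0
  exact eqOn_Icc_of_isIntegralCurveOn hK hf hzero ht₀ hft₀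

end LinearODE

section MatrixCalculus

variable {l m n : Type*} {s : Set ℝ} {t : ℝ}

lemma hasDerivWithinAt_linearMap_comp {E F : Type*} [NormedAddCommGroup E] [NormedSpace ℝ E]
    [FiniteDimensional ℝ E] [NormedAddCommGroup F] [NormedSpace ℝ F] (φ : E →ₗ[ℝ] F) {f : ℝ → E}
    {f' : E} (hf : HasDerivWithinAt f f' s t) :
    HasDerivWithinAt (fun τ => φ (f τ)) (φ f') s t :=
  (LinearMap.toContinuousLinearMap φ).hasFDerivAt.comp_hasDerivWithinAt t hf

lemma hasDerivWithinAt_matrix_transpose [Finite m] [Finite n] {A : ℝ → Matrix m n ℝ}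
    {A' : Matrix m n ℝ} (hA : HasDerivWithinAt A A' s t) :
    HasDerivWithinAt (fun τ => (A τ)ᵀ) A'ᵀ s t := by
  have := Fintype.ofFinite m
  have := Fintype.ofFinite n
  exact hasDerivWithinAt_linearMap_comp (Matrix.transposeLinearEquiv m n ℝ ℝ).toLinearMap hA

lemma hasDerivWithinAt_matrix_mulVec [Finite m] [Fintype n] {A : ℝ → Matrix m n ℝ}
    {A' : Matrix m n ℝ} (hA : HasDerivWithinAt A A' s t) (v : n → ℝ) :
    HasDerivWithinAt (fun τ => A τ *ᵥ v) (A' *ᵥ v) s t := by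
  have := Fintype.ofFinite m
  exact hasDerivWithinAt_linearMap_comp ((Matrix.mulVecBilin ℝ ℝ).flip v) hA

lemma hasDerivWithinAt_matrix_mul [Finite l] [Fintype m] [Finite n] {A : ℝ → Matrix l m ℝ}
    {A' : Matrix l m ℝ} {B : ℝ → Matrix m n ℝ} {B' : Matrix m n ℝ}
    (hA : HasDerivWithinAt A A' s t) (hB : HasDerivWithinAt B B' s t) :
    HasDerivWithinAt (fun τ => A τ * B τ) (A' * B t + A t * B') s t := by
  have := Fintype.ofFinite l
  have := Fintype.ofFinite n
  have hmul : IsBilinearMap ℝ fun (M : Matrix l m ℝ) (N : Matrix m n ℝ) => M * N :=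
    ⟨Matrix.add_mul, Matrix.smul_mul, Matrix.mul_add, fun c M N => Matrix.mul_smul M c N⟩
  rw [add_comm]
  exact hmul.toContinuousBilinearMap.hasDerivWithinAt_of_bilinear hA hB

lemma hasDerivWithinAt_ringInverse {R : Type*} [NormedRing R] [NormedAlgebra ℝ R]
    [CompleteSpace R] {f : ℝ → R} {f' : R} (hf : HasDerivWithinAt f f' s t)
    (hunit : IsUnit (f t)) :
    HasDerivWithinAt (fun τ => Ring.inverse (f τ))
      (-(Ring.inverse (f t) * f' * Ring.inverse (f t))) s t := by
  have hinv := (hasFDerivAt_ringInverse (𝕜 := ℝ) hunit.unit).comp_hasDerivWithinAt t hf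
  simpa [Function.comp_def, ← Ring.inverse_unit] using hinv

lemma hasDerivWithinAt_matrix_inv [Fintype n] [DecidableEq n] {A : ℝ → Matrix n n ℝ}
    {A' : Matrix n n ℝ} (hA : HasDerivWithinAt A A' s t) (hunit : IsUnit (A t)) :
    HasDerivWithinAt (fun τ => (A τ)⁻¹) (-((A t)⁻¹ * A' * (A t)⁻¹)) s t := by
  simp only [Matrix.nonsing_inv_eq_ringInverse]
  -- Derivatives depend only on the topology, so a submultiplicative norm may be used.
  let := Matrix.linftyOpNormedRing (n := n) (α := ℝ)
  let := Matrix.linftyOpNormedAlgebra (n := n) (α := ℝ) (R := ℝ)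
  exact @hasDerivWithinAt_ringInverse s t (Matrix n n ℝ) _ _ (FiniteDimensional.complete ℝ _) _ _
    hA hunit

lemma continuousOn_matrix_mul [Fintype m] {A : ℝ → Matrix l m ℝ} {B : ℝ → Matrix m n ℝ}
    (hA : ContinuousOn A s) (hB : ContinuousOn B s) : ContinuousOn (fun τ => A τ * B τ) s :=
  (continuous_fst.matrix_mul continuous_snd).comp_continuousOn (hA.prodMk hB)

lemma continuousOn_matrix_transpose {A : ℝ → Matrix m n ℝ} (hA : ContinuousOn A s) :
    ContinuousOn (fun τ => (A τ)ᵀ) s :=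
  continuous_id.matrix_transpose.comp_continuousOn hA

lemma continuousOn_matrix_inv [Fintype n] [DecidableEq n] {A : ℝ → Matrix n n ℝ}
    (hA : ContinuousOn A s) (hunit : ∀ τ ∈ s, IsUnit (A τ)) : ContinuousOn (fun τ => (A τ)⁻¹) s :=
  fun τ hτ => (continuousAt_matrix_inv (A τ) (NormedRing.inverse_continuousAt
    ((Matrix.isUnit_iff_isUnit_det _).1 (hunit τ hτ)).unit)).comp_continuousWithinAt (hA τ hτ)

end MatrixCalculus

section LoewnerOrder

open scoped MatrixOrder

variable {D : Set ℝ}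

lemma antitoneOn_linearMap_comp {E : Type*} [NormedAddCommGroup E] [NormedSpace ℝ E]
    [FiniteDimensional ℝ E] (φ : E →ₗ[ℝ] ℝ) (hD : Convex ℝ D) {f f' : ℝ → E}
    (hf : ∀ t ∈ D, HasDerivWithinAt f (f' t) D t) (hf' : ∀ t ∈ D, φ (f' t) ≤ 0) :
    AntitoneOn (fun t => φ (f t)) D := by
  have hφf : ∀ t ∈ D, HasDerivWithinAt (fun τ => φ (f τ)) (φ (f' t)) D t := fun t ht =>
    hasDerivWithinAt_linearMap_comp φ (hf t ht)
  exact antitoneOn_of_hasDerivWithinAt_nonpos hD (fun t ht => (hφf t ht).continuousWithinAt)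
    (fun t ht => (hφf t (interior_subset ht)).mono interior_subset)
    fun t ht => hf' t (interior_subset ht)

theorem antitoneOn_matrix_of_hasDerivWithinAt_nonpos {n : Type*} [Finite n] (hD : Convex ℝ D)
    {W W' : ℝ → Matrix n n ℝ} (hW : ∀ t ∈ D, HasDerivWithinAt W (W' t) D t)
    (hW' : ∀ t ∈ D, W' t ≤ 0) : AntitoneOn W D := by
  intro t ht r hr htr
  have := Fintype.ofFinite n
  have hW'_psd : ∀ τ ∈ D, (-W' τ).PosSemidef := fun τ hτ =>
    Matrix.nonneg_iff_posSemidef.1 (neg_nonneg.2 (hW' τ hτ))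
  have hskew : ∀ i j, W r i j - W r j i ≤ W t i j - W t j i := fun i j =>
    antitoneOn_linearMap_comp (Matrix.entryLinearMap ℝ ℝ i j - Matrix.entryLinearMap ℝ ℝ j i) hD hW
      (fun τ hτ => (sub_eq_zero.2 (neg_inj.1 ((hW'_psd τ hτ).isHermitian.apply j i))).le)
      ht hr htr
  have hform : ∀ v : n → ℝ, v ⬝ᵥ W r *ᵥ v ≤ v ⬝ᵥ W t *ᵥ v := fun v =>
    antitoneOn_linearMap_comp (dotProductBilin ℝ ℝ v ∘ₗ (Matrix.mulVecBilin ℝ ℝ).flip v) hD hW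
      (fun τ hτ => by
        have hneg := (hW'_psd τ hτ).dotProduct_mulVec_nonneg v
        rwa [Matrix.neg_mulVec, dotProduct_neg, neg_nonneg] at hneg)
      ht hr htr
  rw [Matrix.le_iff]
  refine Matrix.PosSemidef.of_dotProduct_mulVec_nonneg (Matrix.IsHermitian.ext fun i j => ?_)
    fun v => ?_
  · rw [Matrix.sub_apply, Matrix.sub_apply, star_trivial]
    linarith [hskew i j, hskew j i]
  · rw [Matrix.sub_mulVec, dotProduct_sub]
    exact sub_nonneg.2 (hform v)

end LoewnerOrder

section HamiltonianSystem

variable {m n : Type*} [Fintype n] {a b : ℝ} {s u : Set ℝ} {A S Q : ℝ → Matrix n n ℝ}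
  {X Y : ℝ → Matrix n m ℝ}

/-- `X` and `Y` solve on `s` the linear Hamiltonian system with coefficients `A`, `S`, `Q`. It
linearizes the Riccati equation, of which `Y * X⁻¹` is a solution where `X` is invertible. -/
structure IsHamiltonianSolutionOn (A S Q : ℝ → Matrix n n ℝ) (X Y : ℝ → Matrix n m ℝ)
    (s : Set ℝ) : Prop where
  hasDerivWithinAt_state : ∀ t ∈ s, HasDerivWithinAt X (A t * X t - S t * Y t) s t
  hasDerivWithinAt_costate : ∀ t ∈ s, HasDerivWithinAt Y (-(Q t * X t) - (A t)ᵀ * Y t) s t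

/-- The right-hand side of the linear Hamiltonian system, as a linear map on pairs `(X, Y)`. -/
def hamiltonianMap (A S Q : Matrix n n ℝ) :
    Matrix n m ℝ × Matrix n m ℝ →ₗ[ℝ] Matrix n m ℝ × Matrix n m ℝ where
  toFun Z := (A * Z.1 - S * Z.2, -(Q * Z.1) - Aᵀ * Z.2)
  map_add' Z Z' := by
    simp only [Prod.fst_add, Prod.snd_add, Matrix.mul_add, Prod.mk_add_mk]
    congr 1 <;> abel
  map_smul' c Z := by simp [smul_sub]

theorem exists_isHamiltonianSolutionOn_right [Finite m] (hab : a ≤ b)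
    (hA : ContinuousOn A (Icc a b)) (hS : ContinuousOn S (Icc a b))
    (hQ : ContinuousOn Q (Icc a b)) (X₀ Y₀ : Matrix n m ℝ) :
    ∃ X Y : ℝ → Matrix n m ℝ,
      X b = X₀ ∧ Y b = Y₀ ∧ IsHamiltonianSolutionOn A S Q X Y (Icc a b) := by
  have := Fintype.ofFinite m
  have hmap : ContinuousOn
      (fun t => LinearMap.toContinuousLinearMap (hamiltonianMap (m := m) (A t) (S t) (Q t)))
      (Icc a b) :=
    continuousOn_clm_apply.2 fun Z =>
      ((continuousOn_matrix_mul hA continuousOn_const).sub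
        (continuousOn_matrix_mul hS continuousOn_const)).prodMk
      ((continuousOn_matrix_mul hQ continuousOn_const).neg.sub
        (continuousOn_matrix_mul (continuousOn_matrix_transpose hA) continuousOn_const))
  obtain ⟨Z, hZb, hZ⟩ := exists_isIntegralCurveOn_linear_right hab hmap (X₀, Y₀)
  exact ⟨fun t => (Z t).1, fun t => (Z t).2, congrArg Prod.fst hZb, congrArg Prod.snd hZb,
    fun t ht => hasDerivWithinAt_linearMap_comp (LinearMap.fst ℝ _ _) (hZ t ht),
    fun t ht => hasDerivWithinAt_linearMap_comp (LinearMap.snd ℝ _ _) (hZ t ht)⟩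

namespace IsHamiltonianSolutionOn

lemma mono [Finite m] (h : IsHamiltonianSolutionOn A S Q X Y s) (hus : u ⊆ s) :
    IsHamiltonianSolutionOn A S Q X Y u := by
  have := Fintype.ofFinite m
  exact ⟨fun t ht => (h.hasDerivWithinAt_state t (hus ht)).mono hus,
    fun t ht => (h.hasDerivWithinAt_costate t (hus ht)).mono hus⟩

lemma hasDerivWithinAt_pairing [Finite m] (h : IsHamiltonianSolutionOn A S Q X Y s) {t : ℝ}
    (ht : t ∈ s) (hS : (S t).IsHermitian) :
    HasDerivWithinAt (fun τ => (X τ)ᵀ * Y τ)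
      (-((Y t)ᵀ * S t * Y t + (X t)ᵀ * Q t * X t)) s t := by
  have := Fintype.ofFinite m
  have hSt : (S t)ᵀ = S t := by rw [← Matrix.conjTranspose_eq_transpose_of_trivial, hS.eq]
  refine (hasDerivWithinAt_matrix_mul
    (hasDerivWithinAt_matrix_transpose (h.hasDerivWithinAt_state t ht))
    (h.hasDerivWithinAt_costate t ht)).congr_deriv ?_
  simp only [Matrix.transpose_sub, Matrix.transpose_mul, hSt, Matrix.sub_mul, Matrix.mul_sub,
    Matrix.mul_neg, Matrix.mul_assoc]
  abel

open scoped MatrixOrder in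
lemma antitoneOn_pairing [Finite m] (h : IsHamiltonianSolutionOn A S Q X Y s)
    (hs : Convex ℝ s) (hS : ∀ t ∈ s, (S t).PosSemidef) (hQ : ∀ t ∈ s, (Q t).PosSemidef) :
    AntitoneOn (fun t => (X t)ᵀ * Y t) s := by
  refine antitoneOn_matrix_of_hasDerivWithinAt_nonpos hs
    (fun t ht => h.hasDerivWithinAt_pairing ht (hS t ht).isHermitian) fun t ht => ?_
  exact neg_nonpos.2 (((hS t ht).conjTranspose_mul_mul_same (Y t)).add
    ((hQ t ht).conjTranspose_mul_mul_same (X t))).nonneg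

lemma posSemidef_pairing [Finite m] (h : IsHamiltonianSolutionOn A S Q X Y (Icc a b))
    (hS : ∀ t ∈ Icc a b, (S t).PosSemidef) (hQ : ∀ t ∈ Icc a b, (Q t).PosSemidef)
    (hb : ((X b)ᵀ * Y b).PosSemidef) {t : ℝ} (ht : t ∈ Icc a b) :
    ((X t)ᵀ * Y t).PosSemidef := by
  have hmono := h.antitoneOn_pairing (convex_Icc a b) hS hQ ht
    (right_mem_Icc.2 (ht.1.trans ht.2)) ht.2
  simpa only [sub_add_cancel] using (Matrix.le_iff.1 hmono).add hb

lemma pairing_mulVec_eq_zero [Fintype m] (h : IsHamiltonianSolutionOn A S Q X Y (Icc a b))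
    (hS : ∀ t ∈ Icc a b, (S t).PosSemidef) (hQ : ∀ t ∈ Icc a b, (Q t).PosSemidef)
    (hb : ((X b)ᵀ * Y b).PosSemidef) {v : m → ℝ} (hv : X a *ᵥ v = 0) {t : ℝ}
    (ht : t ∈ Icc a b) : ((X t)ᵀ * Y t) *ᵥ v = 0 := by
  have hpos := h.posSemidef_pairing hS hQ hb ht
  have hanti := (Matrix.le_iff.1 (h.antitoneOn_pairing (convex_Icc a b) hS hQ
    (left_mem_Icc.2 (ht.1.trans ht.2)) ht ht.1)).dotProduct_mulVec_nonneg v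
  have ha : star v ⬝ᵥ ((X a)ᵀ * Y a) *ᵥ v = 0 := by
    rw [← Matrix.mulVec_mulVec, Matrix.dotProduct_mulVec, star_trivial, Matrix.vecMul_transpose,
      hv, zero_dotProduct]
  rw [Matrix.sub_mulVec, dotProduct_sub, ha, zero_sub, neg_nonneg] at hanti
  exact (hpos.dotProduct_mulVec_zero_iff v).1 (hanti.antisymm (hpos.dotProduct_mulVec_nonneg v))

lemma costate_mulVec_eq_zero [Fintype m]
    (h : IsHamiltonianSolutionOn A S Q X Y (Icc a b)) (hab : a < b)
    (hS : ∀ t ∈ Icc a b, (S t).PosSemidef) (hQ : ∀ t ∈ Icc a b, (Q t).PosSemidef)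
    (hb : ((X b)ᵀ * Y b).PosSemidef) {v : m → ℝ} (hv : X a *ᵥ v = 0) {t : ℝ}
    (ht : t ∈ Icc a b) : S t *ᵥ (Y t *ᵥ v) = 0 := by
  have hYSY := (hS t ht).conjTranspose_mul_mul_same (Y t)
  have hXQX := (hQ t ht).conjTranspose_mul_mul_same (X t)
  have hderiv : -((Y t)ᴴ * S t * Y t + (X t)ᴴ * Q t * X t) *ᵥ v = 0 := by
    refine (uniqueDiffOn_Icc hab t ht).eq_deriv _ (hasDerivWithinAt_matrix_mulVec
      (h.hasDerivWithinAt_pairing ht (hS t ht).isHermitian) v) ?_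
    exact (hasDerivWithinAt_const t _ 0).congr_of_mem
      (fun τ hτ => h.pairing_mulVec_eq_zero hS hQ hb hv hτ) ht
  have hsum : star v ⬝ᵥ ((Y t)ᴴ * S t * Y t) *ᵥ v + star v ⬝ᵥ ((X t)ᴴ * Q t * X t) *ᵥ v = 0 := by
    rw [← dotProduct_add, ← Matrix.add_mulVec, ← neg_eq_zero, ← dotProduct_neg,
      ← Matrix.neg_mulVec, hderiv, dotProduct_zero]
  have hform : star (Y t *ᵥ v) ⬝ᵥ S t *ᵥ (Y t *ᵥ v) = 0 := by
    rw [Matrix.star_mulVec, ← Matrix.dotProduct_mulVec, Matrix.mulVec_mulVec, Matrix.mulVec_mulVec]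
    exact ((add_eq_zero_iff_of_nonneg (hYSY.dotProduct_mulVec_nonneg v)
      (hXQX.dotProduct_mulVec_nonneg v)).1 hsum).1
  exact ((hS t ht).dotProduct_mulVec_zero_iff _).1 hform

lemma state_mulVec_right_eq_zero [Fintype m]
    (h : IsHamiltonianSolutionOn A S Q X Y (Icc a b)) (hab : a ≤ b)
    (hA : ContinuousOn A (Icc a b)) (hS : ∀ t ∈ Icc a b, (S t).PosSemidef)
    (hQ : ∀ t ∈ Icc a b, (Q t).PosSemidef) (hb : ((X b)ᵀ * Y b).PosSemidef) {v : m → ℝ}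
    (hv : X a *ᵥ v = 0) : X b *ᵥ v = 0 := by
  obtain rfl | hlt := hab.eq_or_lt
  · exact hv
  have hcont : ContinuousOn (fun t => LinearMap.toContinuousLinearMap (A t).mulVecLin) (Icc a b) :=
    continuousOn_clm_apply.2 fun w =>
      (continuous_id.matrix_mulVec continuous_const).comp_continuousOn hA
  refine eqOn_zero_of_isIntegralCurveOn_linear (f := fun t => X t *ᵥ v) hcont (fun t ht => ?_)
    (left_mem_Icc.2 hab) hv (right_mem_Icc.2 hab)
  have hSY := h.costate_mulVec_eq_zero hlt hS hQ hb hv ht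
  refine (hasDerivWithinAt_matrix_mulVec (h.hasDerivWithinAt_state t ht) v).congr_deriv ?_
  rw [Matrix.sub_mulVec, ← Matrix.mulVec_mulVec, ← Matrix.mulVec_mulVec, hSY, sub_zero]
  rfl

theorem isUnit_state [DecidableEq n] {X Y : ℝ → Matrix n n ℝ}
    (h : IsHamiltonianSolutionOn A S Q X Y (Icc a b)) (hA : ContinuousOn A (Icc a b))
    (hS : ∀ t ∈ Icc a b, (S t).PosSemidef) (hQ : ∀ t ∈ Icc a b, (Q t).PosSemidef)
    (hb : ((X b)ᵀ * Y b).PosSemidef) (hXb : IsUnit (X b)) {t : ℝ} (ht : t ∈ Icc a b) :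
    IsUnit (X t) := by
  have hsub : Icc t b ⊆ Icc a b := Icc_subset_Icc_left ht.1
  rw [← Matrix.mulVec_injective_iff_isUnit] at hXb ⊢
  refine (injective_iff_map_eq_zero (X t).mulVecLin).2 fun v hv => ?_
  refine (injective_iff_map_eq_zero (X b).mulVecLin).1 hXb v ?_
  exact (h.mono hsub).state_mulVec_right_eq_zero ht.2 (hA.mono hsub) (fun τ hτ => hS τ (hsub hτ))
    (fun τ hτ => hQ τ (hsub hτ)) hb hv

end IsHamiltonianSolutionOn

end HamiltonianSystem

section Riccati

variable {n : Type*} [Fintype n] {a b : ℝ} {s : Set ℝ} {A S Q X Y P P₂ : ℝ → Matrix n n ℝ}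

/-- The vector field of the Riccati equation `P' = -(P A + Aᵀ P - P S P + Q)` at a fixed time. -/
def riccatiField (A S Q P : Matrix n n ℝ) : Matrix n n ℝ :=
  -(P * A + Aᵀ * P - P * S * P + Q)

lemma riccatiField_sub (A S Q P P₂ : Matrix n n ℝ) :
    riccatiField A S Q P - riccatiField A S Q P₂ =
      -((P - P₂) * (A - S * P) + (Aᵀ - P₂ * S) * (P - P₂)) := by
  unfold riccatiField
  noncomm_ring

theorem eqOn_of_isIntegralCurveOn_riccatiField (hA : ContinuousOn A (Icc a b))
    (hS : ContinuousOn S (Icc a b))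
    (hP : IsIntegralCurveOn P (fun t => riccatiField (A t) (S t) (Q t)) (Icc a b))
    (hP₂ : IsIntegralCurveOn P₂ (fun t => riccatiField (A t) (S t) (Q t)) (Icc a b))
    {t₀ : ℝ} (ht₀ : t₀ ∈ Icc a b) (heq : P t₀ = P₂ t₀) : EqOn P P₂ (Icc a b) := by
  let L : ℝ → Matrix n n ℝ →L[ℝ] Matrix n n ℝ := fun t => LinearMap.toContinuousLinearMap
    (-(LinearMap.mulRight ℝ (A t - S t * P t) + LinearMap.mulLeft ℝ ((A t)ᵀ - P₂ t * S t)))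
  have hL : ContinuousOn L (Icc a b) := continuousOn_clm_apply.2 fun Z =>
    ((continuousOn_matrix_mul continuousOn_const
      (hA.sub (continuousOn_matrix_mul hS hP.continuousOn))).add
    (continuousOn_matrix_mul ((continuousOn_matrix_transpose hA).sub
      (continuousOn_matrix_mul hP₂.continuousOn hS)) continuousOn_const)).neg
  have hsub : IsIntegralCurveOn (fun t => P t - P₂ t) (fun t => L t) (Icc a b) := fun t ht =>
    ((hP t ht).sub (hP₂ t ht)).congr_deriv (riccatiField_sub _ _ _ _ _)
  exact fun t ht => sub_eq_zero.1
    (eqOn_zero_of_isIntegralCurveOn_linear hL hsub ht₀ (sub_eq_zero.2 heq) ht)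

lemma IsHamiltonianSolutionOn.isIntegralCurveOn_quotient [DecidableEq n]
    (h : IsHamiltonianSolutionOn A S Q X Y s) (hX : ∀ t ∈ s, IsUnit (X t)) :
    IsIntegralCurveOn (fun t => Y t * (X t)⁻¹) (fun t => riccatiField (A t) (S t) (Q t)) s := by
  intro t ht
  have hXX : X t * (X t)⁻¹ = 1 :=
    Matrix.mul_nonsing_inv _ ((Matrix.isUnit_iff_isUnit_det _).1 (hX t ht))
  refine (hasDerivWithinAt_matrix_mul (h.hasDerivWithinAt_costate t ht)
    (hasDerivWithinAt_matrix_inv (h.hasDerivWithinAt_state t ht) (hX t ht))).congr_deriv ?_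
  simp only [riccatiField, Matrix.sub_mul, Matrix.mul_sub, Matrix.neg_mul, Matrix.mul_neg,
    Matrix.mul_assoc, hXX, Matrix.mul_one]
  abel

lemma posSemidef_mul_inv_of_transpose_mul [DecidableEq n] {X Y : Matrix n n ℝ}
    (hX : IsUnit X) (h : (Xᵀ * Y).PosSemidef) : (Y * X⁻¹).PosSemidef := by
  have hXX : (X * X⁻¹)ᵀ = 1 := by
    rw [Matrix.mul_nonsing_inv _ ((Matrix.isUnit_iff_isUnit_det _).1 hX), Matrix.transpose_one]
  have hcongr : (X⁻¹)ᴴ * (Xᵀ * Y) * X⁻¹ = Y * X⁻¹ := by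
    rw [Matrix.conjTranspose_eq_transpose_of_trivial, ← Matrix.mul_assoc (X⁻¹)ᵀ,
      ← Matrix.transpose_mul, hXX, Matrix.one_mul]
  exact hcongr ▸ h.conjTranspose_mul_mul_same X⁻¹

theorem exists_posSemidef_isIntegralCurveOn_riccatiField (hab : a ≤ b)
    (hA : ContinuousOn A (Icc a b)) (hS : ContinuousOn S (Icc a b))
    (hQ : ContinuousOn Q (Icc a b)) (hSpos : ∀ t ∈ Icc a b, (S t).PosSemidef)
    (hQpos : ∀ t ∈ Icc a b, (Q t).PosSemidef) {G : Matrix n n ℝ} (hG : G.PosSemidef) :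
    ∃ P : ℝ → Matrix n n ℝ, P b = G ∧ (∀ t ∈ Icc a b, (P t).PosSemidef) ∧
      IsIntegralCurveOn P (fun t => riccatiField (A t) (S t) (Q t)) (Icc a b) := by
  classical
  obtain ⟨X, Y, hXb, hYb, h⟩ := exists_isHamiltonianSolutionOn_right hab hA hS hQ 1 G
  have hb : ((X b)ᵀ * Y b).PosSemidef := by
    rwa [hXb, hYb, Matrix.transpose_one, Matrix.one_mul]
  have hX : ∀ t ∈ Icc a b, IsUnit (X t) := fun t ht =>
    h.isUnit_state hA hSpos hQpos hb (hXb ▸ isUnit_one) ht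
  refine ⟨fun t => Y t * (X t)⁻¹, ?_, fun t ht => ?_, h.isIntegralCurveOn_quotient hX⟩
  · simp only [hXb, hYb, inv_one, Matrix.mul_one]
  · exact posSemidef_mul_inv_of_transpose_mul (hX t ht) (h.posSemidef_pairing hSpos hQpos hb ht)

theorem riccati_global_existence_uniqueness_general (hab : a ≤ b)
    (hA : ContinuousOn A (Icc a b)) (hS : ContinuousOn S (Icc a b))
    (hQ : ContinuousOn Q (Icc a b)) (hSpos : ∀ t ∈ Icc a b, (S t).PosSemidef)
    (hQpos : ∀ t ∈ Icc a b, (Q t).PosSemidef) {G : Matrix n n ℝ} (hG : G.PosSemidef) :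
    ∃ P : ℝ → Matrix n n ℝ,
      IsIntegralCurveOn P (fun t => riccatiField (A t) (S t) (Q t)) (Icc a b) ∧
      P b = G ∧ (∀ t ∈ Icc a b, (P t).PosSemidef) ∧
      ∀ P₂ : ℝ → Matrix n n ℝ,
        IsIntegralCurveOn P₂ (fun t => riccatiField (A t) (S t) (Q t)) (Icc a b) ∧ P₂ b = G →
        ∀ t ∈ Icc a b, P₂ t = P t := by
  obtain ⟨P, hPb, hPpos, hP⟩ :=
    exists_posSemidef_isIntegralCurveOn_riccatiField hab hA hS hQ hSpos hQpos hG
  exact ⟨P, hP, hPb, hPpos, fun P₂ ⟨hP₂, hP₂b⟩ =>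
    eqOn_of_isIntegralCurveOn_riccatiField hA hS hP₂ hP (right_mem_Icc.2 hab)
      (hP₂b.trans hPb.symm)⟩

end Riccati

section ControlWeight

variable {m n : Type*} [DecidableEq m]

lemma posDef_of_posSemidef_sub_smul_one [Finite m] {R : Matrix m m ℝ} {c : ℝ} (hc : 0 < c)
    (hR : (R - c • (1 : Matrix m m ℝ)).PosSemidef) : R.PosDef := by
  simpa only [add_sub_cancel] using (Matrix.PosDef.one.smul hc).add_posSemidef hR

variable [Fintype m]

lemma posSemidef_mul_inv_mul_transpose [Finite n] {R : Matrix m m ℝ} (hR : R.PosDef)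
    (B : Matrix n m ℝ) : (B * R⁻¹ * Bᵀ).PosSemidef :=
  hR.inv.posSemidef.mul_mul_conjTranspose_same B

lemma continuousOn_mul_inv_mul_transpose {s : Set ℝ} {B : ℝ → Matrix n m ℝ}
    {R : ℝ → Matrix m m ℝ} (hB : ContinuousOn B s) (hR : ContinuousOn R s)
    (hpos : ∀ t ∈ s, (R t).PosDef) : ContinuousOn (fun t => B t * (R t)⁻¹ * (B t)ᵀ) s :=
  continuousOn_matrix_mul
    (continuousOn_matrix_mul hB (continuousOn_matrix_inv hR fun t ht => (hpos t ht).isUnit))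
    (continuousOn_matrix_transpose hB)

end ControlWeight

/-- the terminal-value matrix Riccati equation
`dP/dt = −(P Â + Âᵀ P − P B̂ R̂⁻¹ B̂ᵀ P + Q̂)`, `P_T = G`, with `R̂ ⪰ c·Id` (`c > 0`),
`Q̂ ⪰ 0` and `G ⪰ 0`, has exactly one continuously differentiable solution on all of
`[0,T]`, and that solution is positive semidefinite everywhere. -/
theorem riccati_global_existence_uniqueness
    (T : ℝ) (hT : 0 < T) (d κ : ℕ)
    (Ah : ℝ → Mat d) (Bh : ℝ → Matrix (Fin d) (Fin κ) ℝ)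
    (Rh : ℝ → Matrix (Fin κ) (Fin κ) ℝ) (Qh : ℝ → Mat d)
    (hAh : ContinuousOn Ah (Icc (0:ℝ) T)) (hBh : ContinuousOn Bh (Icc (0:ℝ) T))
    (hRh : ContinuousOn Rh (Icc (0:ℝ) T)) (hQh : ContinuousOn Qh (Icc (0:ℝ) T))
    (c : ℝ) (hc : 0 < c)
    (hRpos : ∀ t ∈ Icc (0:ℝ) T,
      (Rh t - c • (1 : Matrix (Fin κ) (Fin κ) ℝ)).PosSemidef)
    (hQpos : ∀ t ∈ Icc (0:ℝ) T, (Qh t).PosSemidef)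
    (G : Mat d) (hG : G.PosSemidef) :
    ∃ P : ℝ → Mat d,
      (∀ t ∈ Icc (0:ℝ) T,
        HasDerivWithinAt P
          (-(P t * Ah t + (Ah t)ᵀ * P t - P t * Bh t * (Rh t)⁻¹ * (Bh t)ᵀ * P t + Qh t))
          (Icc (0:ℝ) T) t) ∧
      P T = G ∧
      (∀ t ∈ Icc (0:ℝ) T, (P t).PosSemidef) ∧
      ∀ P₂ : ℝ → Mat d,
        ((∀ t ∈ Icc (0:ℝ) T,
          HasDerivWithinAt P₂
            (-(P₂ t * Ah t + (Ah t)ᵀ * P₂ t - P₂ t * Bh t * (Rh t)⁻¹ * (Bh t)ᵀ * P₂ t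
              + Qh t))
            (Icc (0:ℝ) T) t) ∧ P₂ T = G) →
        ∀ t ∈ Icc (0:ℝ) T, P₂ t = P t := by
  have hR : ∀ t ∈ Icc (0:ℝ) T, (Rh t).PosDef := fun t ht =>
    posDef_of_posSemidef_sub_smul_one hc (hRpos t ht)
  have hmain := riccati_global_existence_uniqueness_general hT.le hAh
    (continuousOn_mul_inv_mul_transpose hBh hRh hR) hQh
    (fun t ht => posSemidef_mul_inv_mul_transpose (hR t ht) (Bh t)) hQpos hG
  simp only [IsIntegralCurveOn, riccatiField, Matrix.mul_assoc] at hmain ⊢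
  exact hmain
end
end

section
/- In the controlled-path setting below, there exists a constant c ≥ 0, depending only on T, β and β', with the following property. Suppose Z, Z', z, z' are as in the context with all the seminorms ‖δZ‖_β, ‖δZ'‖_{β'}, ‖R^Z‖_{β+β'}, ‖δz‖_β, ‖δz'‖_{β'}, ‖R^z‖_{β+β'} finite, and K, K₀ ≥ 0 satisfy sup_{t∈[0,T]}|Z_t| ≤ K, |Z_0| + ‖δZ‖_β + |Z'_0| + ‖δZ'‖_{β'} + ‖R^Z‖_{β+β'} ≤ K, and |z_0| ≤ K₀, |z'_0| ≤ K₀. Then: (a) ‖δ(Zz)‖_β ≤ cK(‖δz‖_β + K₀); (b) ‖δ((Zz)')‖_{β'} ≤ cK(‖δz‖_β + ‖δz'‖_{β'} + K₀); (c) ‖R^{Zz}‖_β ≤ cK(‖δz‖_β + ‖δz'‖_{β'} + K₀)(1 + ‖δη‖_β); (d) ‖R^{Zz}‖_{β+β'} ≤ cK(‖δz‖_β + ‖R^z‖_{β+β'} + K₀). -/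
open MeasureTheory Matrix Set

noncomputable section

abbrev Vec (d : ℕ) := Fin d → ℝ

attribute [local instance] Matrix.normedAddCommGroup Matrix.normedSpace

/-- Increment of a one-parameter path: `δf s t = f t − f s`. -/
def delta {E : Type*} [AddCommGroup E] (f : ℝ → E) : ℝ → ℝ → E := fun s t => f t - f s

/-- Remainder of a controlled path `(f, f')` with respect to the driver `η`:
`R^f_{s,t} = δf_{s,t} − f'_s (δη_{s,t})`, where the Gubinelli derivative `f'` is recorded
componentwise (`f' t i` is the value of `f'_t` on the `i`-th coordinate direction of `ℝ^p`). -/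
def ctrlRem {p : ℕ} {E : Type*} [AddCommGroup E] [Module ℝ E]
    (η : ℝ → Vec p) (f : ℝ → E) (f' : ℝ → Fin p → E) : ℝ → ℝ → E :=
  fun s t => f t - f s - ∑ i, (η t i - η s i) • f' s i

/-- The `γ`-Hölder seminorm of a two-parameter function over `0 ≤ s < t ≤ T`
(as a supremum in `ℝ`). -/
def holderSN (T γ : ℝ) {E : Type*} [NormedAddCommGroup E] (F : ℝ → ℝ → E) : ℝ :=
  ⨆ q : {q : ℝ × ℝ // 0 ≤ q.1 ∧ q.1 < q.2 ∧ q.2 ≤ T},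
    ‖F q.1.1 q.1.2‖ / (q.1.2 - q.1.1) ^ γ

/-- Finiteness of the `γ`-Hölder seminorm. -/
def holderFin (T γ : ℝ) {E : Type*} [NormedAddCommGroup E] (F : ℝ → ℝ → E) : Prop :=
  BddAbove (Set.range fun q : {q : ℝ × ℝ // 0 ≤ q.1 ∧ q.1 < q.2 ∧ q.2 ≤ T} =>
    ‖F q.1.1 q.1.2‖ / (q.1.2 - q.1.1) ^ γ)

/-!
For a continuous bilinear map `B`, the discrete Leibniz rule
`δ(B(f,g))_{s,t} = B(δf_{s,t}, g_t) + B(f_s, δg_{s,t})` shows that products of bounded Hölder paths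
are Hölder, and applies to each of the two terms of the Gubinelli derivative
`B(f',g) + B(f,g')`. Expanding both increments around `s` gives the remainder of the product as
`B(R^f, g_s) + B(f_s, R^g) + B(δf, δg)`, whose last term has the exponents of `f` and `g` added.
For the exponent `β` alone, the remainder is bounded crudely by `δ(B(f,g))` plus `δη` times the
supremum of the derivative.
On a bounded interval a Hölder path is bounded by its starting point and its seminorm, and is Hölder
for every smaller exponent; both cost only powers of `T`.
-/

section Holder

variable {E : Type*} [NormedAddCommGroup E] {T γ γ' : ℝ}

/-- The `γ`-Hölder seminorm over `0 ≤ s < t ≤ T` of the two-parameter function `Φ` is finite and at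
most `C`. Unlike `holderSN T γ Φ ≤ C`, this does not hold by default for an infinite seminorm. -/
def HolderSeminormLE (T γ : ℝ) (Φ : ℝ → ℝ → E) (C : ℝ) : Prop :=
  ∀ ⦃s t : ℝ⦄, 0 ≤ s → s < t → t ≤ T → ‖Φ s t‖ ≤ C * (t - s) ^ γ

/-- The path `f` lies in the ball of radius `C` of the space of `γ`-Hölder paths on `[0, T]`, normed
by the maximum of the supremum norm and the Hölder seminorm. -/
structure HolderNormLE (T γ : ℝ) (f : ℝ → E) (C : ℝ) : Prop where
  norm_le : ∀ t ∈ Icc 0 T, ‖f t‖ ≤ C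
  seminorm_le : HolderSeminormLE T γ (delta f) C

theorem rpow_le_one_add_rpow {u : ℝ} (hu : 0 ≤ u) (huT : u ≤ T) (hγ' : 0 ≤ γ') (hγ : γ' ≤ γ) :
    u ^ γ' ≤ (1 + T) ^ γ :=
  calc u ^ γ' ≤ (1 + T) ^ γ' := Real.rpow_le_rpow hu (by linarith) hγ'
    _ ≤ (1 + T) ^ γ := Real.rpow_le_rpow_of_exponent_le (by linarith) hγ

theorem holderSN_nonneg (T γ : ℝ) (Φ : ℝ → ℝ → E) : 0 ≤ holderSN T γ Φ :=
  Real.iSup_nonneg fun q =>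
    div_nonneg (norm_nonneg _) (Real.rpow_nonneg (sub_nonneg.2 q.2.2.1.le) _)

theorem holderFin.holderSeminormLE {Φ : ℝ → ℝ → E} (h : holderFin T γ Φ) :
    HolderSeminormLE T γ Φ (holderSN T γ Φ) := fun s t hs hst ht =>
  (div_le_iff₀ (Real.rpow_pos_of_pos (sub_pos.2 hst) _)).1 (le_ciSup h ⟨(s, t), hs, hst, ht⟩)

namespace HolderSeminormLE

variable {Φ Ψ : ℝ → ℝ → E} {C D : ℝ}

theorem holderSN_le (h : HolderSeminormLE T γ Φ C) (hT : 0 < T) : holderSN T γ Φ ≤ C := by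
  have : Nonempty {q : ℝ × ℝ // 0 ≤ q.1 ∧ q.1 < q.2 ∧ q.2 ≤ T} := ⟨⟨(0, T), le_rfl, hT, le_rfl⟩⟩
  exact ciSup_le fun q => (div_le_iff₀ (Real.rpow_pos_of_pos (sub_pos.2 q.2.2.1) _)).2
    (h q.2.1 q.2.2.1 q.2.2.2)

theorem mono (h : HolderSeminormLE T γ Φ C) (hCD : C ≤ D) : HolderSeminormLE T γ Φ D :=
  fun _ _ hs hst ht => (h hs hst ht).trans <|
    mul_le_mul_of_nonneg_right hCD (Real.rpow_nonneg (sub_nonneg.2 hst.le) _)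

theorem add (hΦ : HolderSeminormLE T γ Φ C) (hΨ : HolderSeminormLE T γ Ψ D) :
    HolderSeminormLE T γ (Φ + Ψ) (C + D) := fun _ _ hs hst ht =>
  (norm_add_le_of_le (hΦ hs hst ht) (hΨ hs hst ht)).trans_eq (add_mul _ _ _).symm

theorem of_exponent_le (h : HolderSeminormLE T γ Φ C) (hγ : γ' ≤ γ) :
    HolderSeminormLE T γ' Φ (C * T ^ (γ - γ')) := by
  intro s t hs hst ht
  have hu : 0 < t - s := sub_pos.2 hst
  have hC : 0 ≤ C :=
    nonneg_of_mul_nonneg_left ((norm_nonneg _).trans (h hs hst ht)) (Real.rpow_pos_of_pos hu γ)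
  calc ‖Φ s t‖ ≤ C * (t - s) ^ γ := h hs hst ht
    _ = C * (t - s) ^ (γ - γ') * (t - s) ^ γ' := by
        rw [mul_assoc, ← Real.rpow_add hu, sub_add_cancel]
    _ ≤ C * T ^ (γ - γ') * (t - s) ^ γ' := by
        have : 0 ≤ γ - γ' := sub_nonneg.2 hγ
        gcongr
        linarith

theorem norm_le {f : ℝ → E} (h : HolderSeminormLE T γ (delta f) C) (hC : 0 ≤ C) {t : ℝ}
    (ht : t ∈ Icc 0 T) : ‖f t‖ ≤ ‖f 0‖ + C * t ^ γ := by
  rcases ht.1.eq_or_lt with rfl | ht₀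
  · exact le_add_of_nonneg_right (mul_nonneg hC (Real.rpow_nonneg le_rfl _))
  · have hδ : ‖f t - f 0‖ ≤ C * t ^ γ := by simpa [delta] using h le_rfl ht₀ ht.2
    linarith [norm_le_norm_add_norm_sub' (f t) (f 0)]

end HolderSeminormLE

theorem holderFin.holderNormLE {f : ℝ → E} {α a : ℝ} (h : holderFin T γ (delta f))
    (hγ' : 0 ≤ γ') (hγ : γ' ≤ γ) (hα : γ ≤ α) (ha : ‖f 0‖ + holderSN T γ (delta f) ≤ a) :
    HolderNormLE T γ' f ((1 + T) ^ α * a) := by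
  have hN : 0 ≤ holderSN T γ (delta f) := holderSN_nonneg _ _ _
  have ha' : holderSN T γ (delta f) ≤ a := by linarith [norm_nonneg (f 0)]
  refine ⟨fun t ht => ?_, fun s t hs hst ht => ?_⟩
  · have hT : 0 ≤ T := ht.1.trans ht.2
    have hM : 1 ≤ (1 + T) ^ α := Real.one_le_rpow (by linarith) (by linarith)
    calc ‖f t‖ ≤ ‖f 0‖ + holderSN T γ (delta f) * t ^ γ := h.holderSeminormLE.norm_le hN ht
      _ ≤ (1 + T) ^ α * ‖f 0‖ + holderSN T γ (delta f) * (1 + T) ^ α := by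
          gcongr
          · exact le_mul_of_one_le_left (norm_nonneg _) hM
          · exact rpow_le_one_add_rpow ht.1 ht.2 (hγ'.trans hγ) hα
      _ = (1 + T) ^ α * (‖f 0‖ + holderSN T γ (delta f)) := by ring
      _ ≤ (1 + T) ^ α * a := by gcongr
  · have hT : 0 ≤ T := by linarith
    refine (h.holderSeminormLE.of_exponent_le hγ).mono ?_ hs hst ht
    rw [mul_comm]
    gcongr
    exact rpow_le_one_add_rpow hT le_rfl (by linarith) (by linarith)

namespace HolderNormLE

variable {f g : ℝ → E} {a b : ℝ}

theorem add (hf : HolderNormLE T γ f a) (hg : HolderNormLE T γ g b) :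
    HolderNormLE T γ (f + g) (a + b) where
  norm_le t ht := norm_add_le_of_le (hf.norm_le t ht) (hg.norm_le t ht)
  seminorm_le := by
    have h : delta (f + g) = delta f + delta g := by
      ext s t
      exact add_sub_add_comm _ _ _ _
    exact h ▸ hf.seminorm_le.add hg.seminorm_le

theorem nonneg (hf : HolderNormLE T γ f a) (hT : 0 ≤ T) : 0 ≤ a :=
  (norm_nonneg _).trans (hf.norm_le 0 ⟨le_rfl, hT⟩)

theorem apply {ι : Type*} [Fintype ι] {f : ℝ → ι → E} (hf : HolderNormLE T γ f a) (i : ι) :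
    HolderNormLE T γ (fun t => f t i) a where
  norm_le t ht := (norm_le_pi_norm (f t) i).trans (hf.norm_le t ht)
  seminorm_le s t hs hst ht :=
    (norm_le_pi_norm (delta f s t) i).trans (hf.seminorm_le hs hst ht)

theorem pi {ι : Type*} [Fintype ι] {f : ℝ → ι → E} (ha : 0 ≤ a)
    (hf : ∀ i, HolderNormLE T γ (fun t => f t i) a) : HolderNormLE T γ f a where
  norm_le t ht := (pi_norm_le_iff_of_nonneg ha).2 fun i => (hf i).norm_le t ht
  seminorm_le s t hs hst ht := by
    have hu : 0 ≤ (t - s) ^ γ := Real.rpow_nonneg (sub_nonneg.2 hst.le) _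
    exact (pi_norm_le_iff_of_nonneg (mul_nonneg ha hu)).2 fun i => (hf i).seminorm_le hs hst ht

end HolderNormLE

end Holder

section Product

variable {E F G : Type*} [NormedAddCommGroup E] [NormedSpace ℝ E] [NormedAddCommGroup F]
  [NormedSpace ℝ F] [NormedAddCommGroup G] [NormedSpace ℝ G] {T γ γ' a b : ℝ} {p : ℕ}
  {η : ℝ → Vec p} {f : ℝ → E} {f' : ℝ → Fin p → E} {g : ℝ → F} {g' : ℝ → Fin p → F}

theorem norm_sum_smul_le {ι : Type*} [Fintype ι] (x : ι → ℝ) (v : ι → E) :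
    ‖∑ i, x i • v i‖ ≤ Fintype.card ι * (‖x‖ * ‖v‖) :=
  calc ‖∑ i, x i • v i‖ ≤ ∑ _i : ι, ‖x‖ * ‖v‖ :=
        norm_sum_le_of_le _ fun i _ => (norm_smul_le _ _).trans <|
          mul_le_mul (norm_le_pi_norm x i) (norm_le_pi_norm v i) (norm_nonneg _) (norm_nonneg _)
    _ = Fintype.card ι * (‖x‖ * ‖v‖) := by simp

theorem HolderSeminormLE.remainder {H : ℝ} (hη : HolderSeminormLE T γ (delta η) H)
    (hf : HolderSeminormLE T γ (delta f) a) (hf' : ∀ t ∈ Icc 0 T, ‖f' t‖ ≤ b) :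
    HolderSeminormLE T γ (ctrlRem η f f') (a + p * (H * b)) := by
  intro s t hs hst ht
  have hsum : ‖∑ i, (η t i - η s i) • f' s i‖ ≤ p * (H * (t - s) ^ γ * b) := by
    refine (norm_sum_smul_le (delta η s t) (f' s)).trans ?_
    rw [Fintype.card_fin]
    gcongr
    · exact (norm_nonneg _).trans (hη hs hst ht)
    · exact hη hs hst ht
    · exact hf' s ⟨hs, hst.le.trans ht⟩
  calc ‖ctrlRem η f f' s t‖ ≤ a * (t - s) ^ γ + p * (H * (t - s) ^ γ * b) :=
        norm_sub_le_of_le (hf hs hst ht) hsum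
    _ = (a + p * (H * b)) * (t - s) ^ γ := by ring

variable (B : E →L[ℝ] F →L[ℝ] G)

theorem delta_bilin (f : ℝ → E) (g : ℝ → F) (s t : ℝ) :
    delta (fun t => B (f t) (g t)) s t = B (delta f s t) (g t) + B (f s) (delta g s t) := by
  simp only [delta, map_sub, _root_.sub_apply]
  abel

theorem ctrlRem_bilin (η : ℝ → Vec p) (f : ℝ → E) (f' : ℝ → Fin p → E) (g : ℝ → F)
    (g' : ℝ → Fin p → F) (s t : ℝ) :
    ctrlRem η (fun t => B (f t) (g t)) (fun t i => B (f' t i) (g t) + B (f t) (g' t i)) s t =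
      B (ctrlRem η f f' s t) (g s) + B (f s) (ctrlRem η g g' s t) +
        B (delta f s t) (delta g s t) := by
  simp only [ctrlRem, delta, map_sub, map_sum, map_smul, _root_.sub_apply, _root_.sum_apply,
    _root_.smul_apply, smul_add, Finset.sum_add_distrib]
  abel

theorem HolderNormLE.bilin (hf : HolderNormLE T γ f a) (hg : HolderNormLE T γ g b) :
    HolderNormLE T γ (fun t => B (f t) (g t)) (2 * (‖B‖ * a * b)) where
  norm_le t ht := by
    have h := B.le_of_opNorm₂_le_of_le le_rfl (hf.norm_le t ht) (hg.norm_le t ht)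
    linarith [norm_nonneg (B (f t) (g t))]
  seminorm_le s t hs hst ht := by
    have h₁ := B.le_of_opNorm₂_le_of_le le_rfl (hf.seminorm_le hs hst ht)
      (hg.norm_le t ⟨hs.trans hst.le, ht⟩)
    have h₂ := B.le_of_opNorm₂_le_of_le le_rfl (hf.norm_le s ⟨hs, hst.le.trans ht⟩)
      (hg.seminorm_le hs hst ht)
    rw [delta_bilin]
    linarith [norm_add_le_of_le h₁ h₂]

theorem HolderNormLE.bilin_deriv (hT : 0 ≤ T)
    (hf : HolderNormLE T γ f a) (hf' : HolderNormLE T γ f' a)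
    (hg : HolderNormLE T γ g b) (hg' : HolderNormLE T γ g' b) :
    HolderNormLE T γ (fun t i => B (f' t i) (g t) + B (f t) (g' t i)) (4 * (‖B‖ * a * b)) := by
  have ha : 0 ≤ a := hf.nonneg hT
  have hb : 0 ≤ b := hg.nonneg hT
  refine .pi (by positivity) fun i => ?_
  have h := ((hf'.apply i).bilin B hg).add (hf.bilin B (hg'.apply i))
  rwa [← add_mul, two_add_two_eq_four] at h

theorem HolderSeminormLE.remainder_bilin (hf : HolderNormLE T γ f a) (hg : HolderNormLE T γ' g b)
    (hRf : HolderSeminormLE T (γ + γ') (ctrlRem η f f') a)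
    (hRg : HolderSeminormLE T (γ + γ') (ctrlRem η g g') b) :
    HolderSeminormLE T (γ + γ')
      (ctrlRem η (fun t => B (f t) (g t)) (fun t i => B (f' t i) (g t) + B (f t) (g' t i)))
      (3 * (‖B‖ * a * b)) := by
  intro s t hs hst ht
  have hsT : s ∈ Icc 0 T := ⟨hs, hst.le.trans ht⟩
  have h₁ := B.le_of_opNorm₂_le_of_le le_rfl (hRf hs hst ht) (hg.norm_le s hsT)
  have h₂ := B.le_of_opNorm₂_le_of_le le_rfl (hf.norm_le s hsT) (hRg hs hst ht)
  have h₃ := B.le_of_opNorm₂_le_of_le le_rfl (hf.seminorm_le hs hst ht)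
    (hg.seminorm_le hs hst ht)
  rw [ctrlRem_bilin]
  refine (norm_add_le_of_le (norm_add_le_of_le h₁ h₂) h₃).trans_eq ?_
  rw [Real.rpow_add (sub_pos.2 hst)]
  ring

/-- The controlled path `(f, f')` lies in the ball of radius `C` for the exponents `β` and `β'`. The
path itself is bounded for every exponent in `[0, β]`, since products in which `f'` occurs see it
only as a `β'`-Hölder path. -/
structure ControlledNormLE (T β β' : ℝ) (η : ℝ → Vec p) (f : ℝ → E) (f' : ℝ → Fin p → E) (C : ℝ) :
    Prop where
  path_le : ∀ γ ∈ Icc 0 β, HolderNormLE T γ f C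
  deriv_le : HolderNormLE T β' f' C
  rem_le : HolderSeminormLE T (β + β') (ctrlRem η f f') C

theorem ControlledNormLE.of_holderFin {β β' K : ℝ} (hT : 0 ≤ T) (hβ' : 0 ≤ β') (hβ'β : β' ≤ β)
    (hf : holderFin T β (delta f)) (hf' : holderFin T β' (delta f'))
    (hR : holderFin T (β + β') (ctrlRem η f f'))
    (hK : ‖f 0‖ + holderSN T β (delta f) + ‖f' 0‖ + holderSN T β' (delta f')
      + holderSN T (β + β') (ctrlRem η f f') ≤ K) :
    ControlledNormLE T β β' η f f' ((1 + T) ^ β * K) := by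
  have hM : 1 ≤ (1 + T) ^ β := Real.one_le_rpow (by linarith) (hβ'.trans hβ'β)
  have hδf := holderSN_nonneg T β (delta f)
  have hδf' := holderSN_nonneg T β' (delta f')
  have hRf := holderSN_nonneg T (β + β') (ctrlRem η f f')
  have hf₀ := norm_nonneg (f 0)
  have hf'₀ := norm_nonneg (f' 0)
  exact ⟨fun γ hγ => hf.holderNormLE hγ.1 hγ.2 le_rfl (by linarith),
    hf'.holderNormLE hβ' le_rfl hβ'β (by linarith), hR.holderSeminormLE.mono (by nlinarith)⟩

theorem controlled_path_product_estimates_general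
    (T : ℝ) (hT : 0 < T) (p : ℕ) (β β' : ℝ) (hβ' : 0 ≤ β') (hβ'β : β' ≤ β) :
    ∃ c : ℝ, 0 ≤ c ∧
      ∀ (η : ℝ → Vec p) (Z : ℝ → E) (Z' : ℝ → Fin p → E)
        (z : ℝ → F) (z' : ℝ → Fin p → F) (K K₀ : ℝ),
        holderFin T β (delta η) →
        holderFin T β (delta Z) → holderFin T β' (delta Z') →
        holderFin T (β + β') (ctrlRem η Z Z') →
        holderFin T β (delta z) → holderFin T β' (delta z') →
        holderFin T (β + β') (ctrlRem η z z') →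
        ‖Z 0‖ + holderSN T β (delta Z) + ‖Z' 0‖ + holderSN T β' (delta Z')
            + holderSN T (β + β') (ctrlRem η Z Z') ≤ K →
        ‖z 0‖ ≤ K₀ → ‖z' 0‖ ≤ K₀ →
        (holderSN T β (delta (fun t => B (Z t) (z t)))
            ≤ c * K * (holderSN T β (delta z) + K₀)) ∧
        (holderSN T β' (delta (fun t i => B (Z' t i) (z t) + B (Z t) (z' t i)))
            ≤ c * K * (holderSN T β (delta z) + holderSN T β' (delta z') + K₀)) ∧
        (holderSN T β
              (ctrlRem η (fun t => B (Z t) (z t))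
                (fun t i => B (Z' t i) (z t) + B (Z t) (z' t i)))
            ≤ c * K * (holderSN T β (delta z) + holderSN T β' (delta z') + K₀)
                * (1 + holderSN T β (delta η))) ∧
        (holderSN T (β + β')
              (ctrlRem η (fun t => B (Z t) (z t))
                (fun t i => B (Z' t i) (z t) + B (Z t) (z' t i)))
            ≤ c * K * (holderSN T β (delta z) + holderSN T (β + β') (ctrlRem η z z') + K₀)) := by
  have hβ : 0 ≤ β := hβ'.trans hβ'β
  set M : ℝ := (1 + T) ^ β
  have hM : 1 ≤ M := Real.one_le_rpow (by linarith) hβ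
  refine ⟨4 * (p + 1) * ‖B‖ * M ^ 2, by positivity, ?_⟩
  intro η Z Z' z z' K K₀ hη hZ hZ' hRZ hz hz' hRz hK hz₀ hz'₀
  have hδη := holderSN_nonneg T β (delta η)
  have hδz := holderSN_nonneg T β (delta z)
  have hδz' := holderSN_nonneg T β' (delta z')
  have hRz₀ := holderSN_nonneg T (β + β') (ctrlRem η z z')
  have hK₀ : 0 ≤ K₀ := (norm_nonneg _).trans hz₀
  have hZc : ControlledNormLE T β β' η Z Z' (M * K) := .of_holderFin hT.le hβ' hβ'β hZ hZ' hRZ hK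
  have hK_nonneg : 0 ≤ K :=
    nonneg_of_mul_nonneg_right (hZc.deriv_le.nonneg hT.le) (by linarith)
  have hβ_mem : β ∈ Icc 0 β := ⟨hβ, le_rfl⟩
  have hβ'_mem : β' ∈ Icc 0 β := ⟨hβ', hβ'β⟩
  have z_le (γ : ℝ) (hγ : γ ∈ Icc 0 β) (X : ℝ) (hX : holderSN T β (delta z) + K₀ ≤ X) :
      HolderNormLE T γ z (M * X) := hz.holderNormLE hγ.1 hγ.2 le_rfl (by linarith)
  have Zz_le (X : ℝ) (hX : holderSN T β (delta z) + K₀ ≤ X) :=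
    (hZc.path_le β hβ_mem).bilin B (z_le β hβ_mem X hX)
  set S := holderSN T β (delta z) + holderSN T β' (delta z') + K₀
  have Zz'_le := HolderNormLE.bilin_deriv B hT.le (hZc.path_le β' hβ'_mem) hZc.deriv_le
    (z_le β' hβ'_mem S (by linarith)) (hz'.holderNormLE hβ' le_rfl hβ'β (by linarith : _ ≤ S))
  set W := holderSN T β (delta z) + holderSN T (β + β') (ctrlRem η z z') + K₀
  have Zz_rem_le := HolderSeminormLE.remainder_bilin B (hZc.path_le β hβ_mem)
    (z_le β' hβ'_mem W (by linarith)) hZc.rem_le (hRz.holderSeminormLE.mono (by nlinarith))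
  have hc {k X : ℝ} (hX : 0 ≤ X) (hk : k ≤ 4) :
      k * (‖B‖ * (M * K) * (M * X)) ≤ 4 * (p + 1) * ‖B‖ * M ^ 2 * K * X :=
    calc k * (‖B‖ * (M * K) * (M * X)) ≤ 4 * (p + 1) * (‖B‖ * (M * K) * (M * X)) := by
          gcongr
          nlinarith [p.cast_nonneg (α := ℝ)]
      _ = 4 * (p + 1) * ‖B‖ * M ^ 2 * K * X := by ring
  refine ⟨?_, ?_, ?_, ?_⟩
  · refine ((Zz_le _ le_rfl).seminorm_le.holderSN_le hT).trans (hc ?_ ?_) <;> linarith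
  · exact (Zz'_le.seminorm_le.holderSN_le hT).trans (hc (by positivity) le_rfl)
  · have hRZz := hη.holderSeminormLE.remainder (Zz_le S (by linarith)).seminorm_le Zz'_le.norm_le
    refine (hRZz.holderSN_le hT).trans ?_
    have hQ : 0 ≤ ‖B‖ * (M * K) * (M * S) := by positivity
    linarith [mul_nonneg hQ hδη, mul_nonneg p.cast_nonneg hQ]
  · refine (Zz_rem_le.holderSN_le hT).trans (hc ?_ ?_) <;> linarith

end Product

/-- product estimates for controlled rough paths. There is a constant `c ≥ 0`
depending only on `T`, `β`, `β'` (the dimensions being fixed) such that for every driver `η`,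
every matrix-valued controlled path `(Z, Z')` and vector-valued controlled path `(z, z')`
with finite seminorms, bounded by `K` resp. `K₀` as below, the product controlled path
`(Zz, (Zz)')` with `(Zz)_t = Z_t z_t`, `(Zz)'_t v = (Z'_t v) z_t + Z_t (z'_t v)` satisfies
the four seminorm estimates (a)–(d). -/
theorem controlled_path_product_estimates
    (T : ℝ) (hT : 0 < T) (p d : ℕ) (β β' : ℝ)
    (hβ' : 0 < β') (hβ'β : β' ≤ β) (hβ : β ≤ 1) :
    ∃ c : ℝ, 0 ≤ c ∧
      ∀ (η : ℝ → Vec p) (Z : ℝ → Mat d) (Z' : ℝ → Fin p → Mat d)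
        (z : ℝ → Vec d) (z' : ℝ → Fin p → Vec d) (K K₀ : ℝ),
        0 ≤ K → 0 ≤ K₀ →
        holderFin T β (delta η) →
        holderFin T β (delta Z) → holderFin T β' (delta Z') →
        holderFin T (β + β') (ctrlRem η Z Z') →
        holderFin T β (delta z) → holderFin T β' (delta z') →
        holderFin T (β + β') (ctrlRem η z z') →
        (∀ t ∈ Icc (0:ℝ) T, ‖Z t‖ ≤ K) →
        ‖Z 0‖ + holderSN T β (delta Z) + ‖Z' 0‖ + holderSN T β' (delta Z')
            + holderSN T (β + β') (ctrlRem η Z Z') ≤ K →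
        ‖z 0‖ ≤ K₀ → ‖z' 0‖ ≤ K₀ →
        -- (a)
        (holderSN T β (delta (fun t => Z t *ᵥ z t))
            ≤ c * K * (holderSN T β (delta z) + K₀)) ∧
        -- (b)
        (holderSN T β' (delta (fun t i => Z' t i *ᵥ z t + Z t *ᵥ z' t i))
            ≤ c * K * (holderSN T β (delta z) + holderSN T β' (delta z') + K₀)) ∧
        -- (c)
        (holderSN T β
              (ctrlRem η (fun t => Z t *ᵥ z t) (fun t i => Z' t i *ᵥ z t + Z t *ᵥ z' t i))
            ≤ c * K * (holderSN T β (delta z) + holderSN T β' (delta z') + K₀)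
                * (1 + holderSN T β (delta η))) ∧
        -- (d)
        (holderSN T (β + β')
              (ctrlRem η (fun t => Z t *ᵥ z t) (fun t i => Z' t i *ᵥ z t + Z t *ᵥ z' t i))
            ≤ c * K * (holderSN T β (delta z) + holderSN T (β + β') (ctrlRem η z z') + K₀)) := by
  obtain ⟨c, hc, h⟩ := controlled_path_product_estimates_general
    (mulVecBilin ℝ ℝ : Mat d →ₗ[ℝ] Vec d →ₗ[ℝ] Vec d).toContinuousBilinearMap
    T hT p β β' hβ'.le hβ'β
  exact ⟨c, hc, fun η Z Z' z z' K K₀ _ _ hη hZ hZ' hRZ hz hz' hRz _ =>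
    h η Z Z' z z' K K₀ hη hZ hZ' hRZ hz hz' hRz⟩
end
end
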